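/- Let X = ℓ∞³, Y = ℓ₁³, and let T : X → Y be a bounded linear operator with ‖T‖ = 1 such that M_T ∩ Ext(B_X) = {±x₁, ±x₂, ±x₃, ±x₄}. Suppose |S₁| = 4, |S₂| = 4 and |S₃| = 0. If ±J(Tx_i) = ±J(Tx_j) for all x_i, x_j ∈ S₁ and ±J(Tx_i) ⊆ ±Ext J(Tx_k) for all x_i ∈ S₁ and all x_k ∈ S₂, then T is 5-smooth, i.e., dim span J(T) = 5. -/

import Mathlib

open Metric Set Module Pointwise

noncomputable section

/-- `J x` is the set of supporting functionals of `x`. -/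
def suppFunctionals {E : Type*} [NormedAddCommGroup E] [NormedSpace ℝ E] (x : E) :
    Set (E →L[ℝ] ℝ) := {f | ‖f‖ = 1 ∧ f x = 1}

/-- ℓ∞³ : ℝ³ with the max norm. -/
abbrev Linf3 := Fin 3 → ℝ

/-- ℓ₁³ : ℝ³ with the ℓ¹ norm. -/
abbrev L13 := PiLp 1 (fun _ : Fin 3 => ℝ)

def x₁ : Linf3 := ![1, 1, 1]
def x₂ : Linf3 := ![-1, 1, 1]
def x₃ : Linf3 := ![-1, -1, 1]
def x₄ : Linf3 := ![1, -1, 1]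

/-- `M_T ∩ Ext(B_X)`: the norm-attainment set of `T` intersected with the
extreme points of the closed unit ball. -/
def MTExt (T : Linf3 →L[ℝ] L13) : Set Linf3 :=
  {x ∈ sphere (0 : Linf3) 1 | ‖T x‖ = ‖T‖} ∩ extremePoints ℝ (closedBall (0 : Linf3) 1)

/-- `Sk T k` is the set `S_k` of points `x` of `M_T ∩ Ext(B_X)` such that `T x` is
`k`-smooth. -/
def Sk (T : Linf3 →L[ℝ] L13) (k : ℕ) : Set Linf3 :=
  {x ∈ MTExt T | finrank ℝ (Submodule.span ℝ (suppFunctionals (T x))) = k}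

/-- `±A`, i.e. `A ∪ (-A)`. -/
def pm {E : Type*} [NormedAddCommGroup E] [NormedSpace ℝ E] (A : Set (E →L[ℝ] ℝ)) :
    Set (E →L[ℝ] ℝ) := A ∪ (-A)

/-!
When `B_X` has finitely many extreme points, `S ↦ (S x)ₓ`, with `x` running over `Ext(B_X)`, embeds
the operators isometrically into a finite `ℓ∞`-sum of copies of `Y`. Extending functionals along
this embedding by Hahn–Banach shows that `span J(T)` is the sum of the spaces
`span J(Tx) ⊗ x` over `x ∈ M_T ∩ Ext(B_X)`.

If `S₂` consists of two antipodal pairs, one point from each pair gives an independent set, which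
extends to a basis of `X` inside `M_T ∩ Ext(B_X)`; its other members lie in `S₁`. The inclusions
between the sets `±J(Tx)` make the summands at the basis vectors absorb all the others, so that
`dim span J(T)` is the sum of the orders of smoothness along the basis: `2 + 2 + 1 = 5` in
dimension three.
-/

section SuppSpan

variable {E E' : Type*} [NormedAddCommGroup E] [NormedSpace ℝ E]
  [NormedAddCommGroup E'] [NormedSpace ℝ E']

/-- The span of the supporting functionals of `x`; its dimension is the order of smoothness
of `x`. -/
abbrev suppSpan (x : E) : Submodule ℝ (E →L[ℝ] ℝ) := Submodule.span ℝ (suppFunctionals x)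

lemma mem_suppFunctionals_of_norm_le {x : E} {f : E →L[ℝ] ℝ} (hx : ‖x‖ ≤ 1) (hf : ‖f‖ ≤ 1)
    (h : f x = 1) : f ∈ suppFunctionals x := by
  refine ⟨hf.antisymm ?_, h⟩
  calc 1 = ‖f x‖ := by rw [h, norm_one]
    _ ≤ ‖f‖ * ‖x‖ := f.le_opNorm x
    _ ≤ ‖f‖ := mul_le_of_le_one_right (norm_nonneg f) hx

lemma one_le_norm_of_mem_suppFunctionals {x : E} {f : E →L[ℝ] ℝ} (hf : f ∈ suppFunctionals x) :
    1 ≤ ‖x‖ := by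
  simpa [hf.1, hf.2] using f.le_opNorm x

lemma mem_suppSpan_of_norm_le_apply {x : E} {f : E →L[ℝ] ℝ} (hx : ‖x‖ ≤ 1) (h : ‖f‖ ≤ f x) :
    f ∈ suppSpan x := by
  rcases eq_or_ne f 0 with rfl | hf
  · exact zero_mem _
  have hfx : f x = ‖f‖ :=
    ((le_abs_self _).trans (f.unit_le_opNorm x hx)).antisymm h
  have hf' : ‖f‖ ≠ 0 := norm_ne_zero_iff.2 hf
  have hmem : ‖f‖⁻¹ • f ∈ suppFunctionals x :=
    ⟨by simp [norm_smul, hf'], by simp [hfx, hf']⟩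
  simpa [smul_smul, hf'] using (suppSpan x).smul_mem ‖f‖ (Submodule.subset_span hmem)

lemma suppFunctionals_neg (x : E) : suppFunctionals (-x) = -suppFunctionals x := by
  ext f
  simp [suppFunctionals]

lemma suppSpan_neg (x : E) : suppSpan (-x) = suppSpan x := by
  rw [suppSpan, suppFunctionals_neg, Submodule.span_neg]

lemma suppSpan_le_span_of_subset_pm {x : E} {A : Set (E →L[ℝ] ℝ)}
    (h : suppFunctionals x ⊆ pm A) : suppSpan x ≤ Submodule.span ℝ A :=
  Submodule.span_le.2 fun _ hf => (h hf).elim (fun hA => Submodule.subset_span hA)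
    fun hA => neg_mem_iff.1 (Submodule.subset_span (mem_neg.1 hA))

lemma exists_mem_suppFunctionals_comp_eq (Φ : E →ₗᵢ[ℝ] E') {x : E} {F : E →L[ℝ] ℝ}
    (hF : F ∈ suppFunctionals x) :
    ∃ G ∈ suppFunctionals (Φ x), ∀ z, G (Φ z) = F z := by
  let e := Φ.equivRange
  obtain ⟨G, hG, hGn⟩ := exists_extension_norm_eq (LinearMap.range Φ.toLinearMap)
    (F.comp (e.symm.toContinuousLinearEquiv : _ →L[ℝ] E))
  have hGΦ : ∀ z, G (Φ z) = F z := fun z => by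
    simpa [e] using hG (e z)
  refine ⟨G, ⟨?_, (hGΦ x).trans hF.2⟩, hGΦ⟩
  rw [hGn, ← hF.1]
  exact F.opNorm_comp_linearIsometryEquiv e.symm

lemma comp_single_mem_suppSpan {ι : Type*} [Fintype ι] [DecidableEq ι] {y : ι → E}
    (hy : ‖y‖ ≤ 1) {G : (ι → E) →L[ℝ] ℝ} (hG : G ∈ suppFunctionals y) (i : ι) :
    G.comp (ContinuousLinearMap.single ℝ (fun _ => E) i) ∈ suppSpan (y i) := by
  refine mem_suppSpan_of_norm_le_apply ((norm_le_pi_norm y i).trans hy) ?_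
  -- Replacing the `i`-th entry of `y` by `v` yields another point of the unit ball.
  have hle : ∀ v : E, ‖v‖ ≤ 1 → G (Pi.single i v) ≤ G (Pi.single i (y i)) := by
    intro v hv
    have hupdate : ‖y + Pi.single i v - Pi.single i (y i)‖ ≤ 1 := by
      refine (pi_norm_le_iff_of_nonneg zero_le_one).2 fun j => ?_
      rcases eq_or_ne j i with rfl | hj
      · simpa using hv
      · simpa [hj] using (norm_le_pi_norm y j).trans hy
    have := (le_abs_self _).trans (G.unit_le_opNorm _ hupdate)
    rw [map_sub, map_add, hG.1, hG.2] at this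
    linarith
  refine ContinuousLinearMap.opNorm_le_of_unit_norm (by simpa using hle 0 (by simp)) ?_
  intro v hv
  refine abs_le'.2 ⟨hle v hv.le, ?_⟩
  simpa [Pi.single_neg] using hle (-v) (by simpa using hv.le)

end SuppSpan

section Operators

variable {X Y : Type*} [NormedAddCommGroup X] [NormedSpace ℝ X]
  [NormedAddCommGroup Y] [NormedSpace ℝ Y]

/-- The elementary tensor `f ⊗ x`, as the functional `S ↦ f (S x)` on operators. -/
def elemTensor : (Y →L[ℝ] ℝ) →ₗ[ℝ] X →ₗ[ℝ] ((X →L[ℝ] Y) →L[ℝ] ℝ) :=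
  LinearMap.mk₂ ℝ (fun f x => f.comp (ContinuousLinearMap.apply ℝ Y x))
    (fun _ _ _ => rfl) (fun _ _ _ => rfl)
    (fun _ _ _ => by ext; simp) (fun _ _ _ => by ext; simp)

@[simp]
lemma elemTensor_apply (f : Y →L[ℝ] ℝ) (x : X) (S : X →L[ℝ] Y) : elemTensor f x S = f (S x) :=
  rfl

lemma elemTensor_mem_suppFunctionals {T : X →L[ℝ] Y} (hT : ‖T‖ ≤ 1) {x : X} (hx : ‖x‖ ≤ 1)
    {f : Y →L[ℝ] ℝ} (hf : f ∈ suppFunctionals (T x)) : elemTensor f x ∈ suppFunctionals T := by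
  refine mem_suppFunctionals_of_norm_le hT ?_ hf.2
  refine ContinuousLinearMap.opNorm_le_bound _ zero_le_one fun S => ?_
  calc ‖f (S x)‖ ≤ ‖f‖ * ‖S x‖ := f.le_opNorm _
    _ = ‖S x‖ := by rw [hf.1, one_mul]
    _ ≤ ‖S‖ := S.unit_le_opNorm x hx
    _ = 1 * ‖S‖ := (one_mul _).symm

lemma finrank_iSup_map_elemTensor {ι : Type*} [Fintype ι] (b : Basis ι ℝ X)
    (W : ι → Submodule ℝ (Y →L[ℝ] ℝ)) [∀ i, FiniteDimensional ℝ (W i)] :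
    finrank ℝ ↥(⨆ i, (W i).map (elemTensor.flip (b i))) = ∑ i, finrank ℝ (W i) := by
  classical
  have : FiniteDimensional ℝ X := b.finiteDimensional_of_finite
  let ψ : (∀ i, W i) →ₗ[ℝ] ((X →L[ℝ] Y) →L[ℝ] ℝ) :=
    LinearMap.lsum ℝ (fun i => W i) ℝ fun i => elemTensor.flip (b i) ∘ₗ (W i).subtype
  -- The rank one operator `y ⊗ bᵢ*` picks out the `i`-th coefficient of `∑ⱼ wⱼ ⊗ bⱼ`.
  have hcoeff (w i y) :
      ψ w ((LinearMap.toContinuousLinearMap (b.coord i)).smulRight y) = (w i : Y →L[ℝ] ℝ) y := by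
    simp [ψ, sum_apply, Finsupp.single_apply, ite_smul, apply_ite]
  have hψ : Function.Injective ψ := fun w w' h => by
    ext i y
    rw [← hcoeff, h, hcoeff]
  have hsingle (i : ι) :
      ψ ∘ₗ LinearMap.single ℝ (fun i => W i) i = elemTensor.flip (b i) ∘ₗ (W i).subtype :=
    LinearMap.ext (LinearMap.lsum_piSingle ℝ (fun i => W i) ℝ _ i)
  have hrange : ⨆ i, (W i).map (elemTensor.flip (b i)) = LinearMap.range ψ := by
    rw [LinearMap.range_eq_map, ← LinearMap.iSup_range_single, Submodule.map_iSup]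
    refine iSup_congr fun i => ?_
    rw [← LinearMap.range_comp, hsingle, LinearMap.range_comp, Submodule.range_subtype]
  have (i : ι) : Module.Free ℝ (W i) := Module.Free.of_divisionRing ℝ (W i)
  rw [hrange, LinearMap.finrank_range_of_inj hψ, Module.finrank_pi_fintype ℝ]

/-- `M_T ∩ Ext(B_X)` for an operator between arbitrary normed spaces. -/
def attainingExtremePoints (T : X →L[ℝ] Y) : Set X :=
  {x ∈ sphere (0 : X) 1 | ‖T x‖ = ‖T‖} ∩ extremePoints ℝ (closedBall (0 : X) 1)

/-- The set `S_k` for an operator between arbitrary normed spaces. -/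
def smoothPoints (T : X →L[ℝ] Y) (k : ℕ) : Set X :=
  {x ∈ attainingExtremePoints T | finrank ℝ (suppSpan (T x)) = k}

lemma norm_le_of_mem_extremePoints {x : X} (hx : x ∈ extremePoints ℝ (closedBall (0 : X) 1)) :
    ‖x‖ ≤ 1 :=
  mem_closedBall_zero_iff.1 hx.1

lemma mem_attainingExtremePoints_of_mem_suppFunctionals {T : X →L[ℝ] Y} (hT : ‖T‖ = 1) {x : X}
    (hx : x ∈ extremePoints ℝ (closedBall (0 : X) 1)) {f : Y →L[ℝ] ℝ}
    (hf : f ∈ suppFunctionals (T x)) : x ∈ attainingExtremePoints T := by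
  have hTx := one_le_norm_of_mem_suppFunctionals hf
  have hx1 := norm_le_of_mem_extremePoints hx
  have hTx' : ‖T x‖ ≤ ‖x‖ := by simpa [hT] using T.le_opNorm x
  refine ⟨⟨mem_sphere_zero_iff_norm.2 ?_, ?_⟩, hx⟩ <;> linarith

lemma neg_mem_smoothPoints {T : X →L[ℝ] Y} {k : ℕ} {x : X} (hx : x ∈ smoothPoints T k) :
    -x ∈ smoothPoints T k := by
  obtain ⟨⟨⟨hnorm, hTx⟩, hext⟩, hk⟩ := hx
  refine ⟨⟨⟨by simpa using hnorm, by simpa using hTx⟩, ?_⟩, by rwa [map_neg, suppSpan_neg]⟩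
  have hball : LinearEquiv.neg ℝ '' closedBall (0 : X) 1 = closedBall 0 1 := by
    ext y
    simp
  rw [← hball, ← image_extremePoints]
  exact ⟨x, hext, rfl⟩

lemma attainingExtremePoints_subset_union_smoothPoints {T : X →L[ℝ] Y} {k l : ℕ} (hkl : k ≠ l)
    (hX : (extremePoints ℝ (closedBall (0 : X) 1)).Finite)
    (hcard : (attainingExtremePoints T).encard ≤
      (smoothPoints T k).encard + (smoothPoints T l).encard) :
    attainingExtremePoints T ⊆ smoothPoints T k ∪ smoothPoints T l := by
  have hsub : smoothPoints T k ∪ smoothPoints T l ⊆ attainingExtremePoints T :=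
    union_subset (sep_subset _ _) (sep_subset _ _)
  have hdisj : Disjoint (smoothPoints T k) (smoothPoints T l) :=
    disjoint_left.2 fun _ hk hl => hkl (hk.2.symm.trans hl.2)
  rw [← encard_union_eq hdisj] at hcard
  exact ((hX.subset fun _ hx => (hsub hx).2).eq_of_subset_of_encard_le hsub hcard).ge

section FiniteDimensional

variable [FiniteDimensional ℝ X]

lemma opNorm_le_of_forall_mem_extremePoints {S : X →L[ℝ] Y} {c : ℝ} (hc : 0 ≤ c)
    (h : ∀ x ∈ extremePoints ℝ (closedBall (0 : X) 1), ‖S x‖ ≤ c) : ‖S‖ ≤ c := by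
  have : ProperSpace X := FiniteDimensional.proper ℝ X
  have hconvex : Convex ℝ (S ⁻¹' closedBall 0 c) :=
    (convex_closedBall _ _).linear_preimage S.toLinearMap
  have hball : closedBall (0 : X) 1 ⊆ S ⁻¹' closedBall 0 c := by
    rw [← closure_convexHull_extremePoints (isCompact_closedBall 0 1) (convex_closedBall 0 1)]
    exact closure_minimal (convexHull_min (fun x hx => by simpa using h x hx) hconvex)
      (isClosed_closedBall.preimage S.continuous)
  refine ContinuousLinearMap.opNorm_le_of_unit_norm hc fun x hx => ?_
  simpa using hball (mem_closedBall_zero_iff.2 hx.le)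

/-- The isometric embedding `S ↦ (S x)ₓ`, where `x` runs over the extreme points of the unit
ball of a polyhedral space. -/
def evalExtremePoints [Fintype (extremePoints ℝ (closedBall (0 : X) 1))] :
    (X →L[ℝ] Y) →ₗᵢ[ℝ] (extremePoints ℝ (closedBall (0 : X) 1) → Y) where
  toFun S x := S x
  map_add' _ _ := rfl
  map_smul' _ _ := rfl
  norm_map' S := by
    refine le_antisymm ((pi_norm_le_iff_of_nonneg (norm_nonneg S)).2 fun x => ?_) ?_
    · exact S.unit_le_opNorm x (norm_le_of_mem_extremePoints x.2)
    · exact opNorm_le_of_forall_mem_extremePoints (norm_nonneg _) fun x hx =>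
        norm_le_pi_norm (fun z : extremePoints ℝ (closedBall (0 : X) 1) => S z) ⟨x, hx⟩

theorem suppSpan_eq_iSup_map_elemTensor (hX : (extremePoints ℝ (closedBall (0 : X) 1)).Finite)
    {T : X →L[ℝ] Y} (hT : ‖T‖ = 1) :
    suppSpan T = ⨆ x ∈ attainingExtremePoints T, (suppSpan (T x)).map (elemTensor.flip x) := by
  classical
  have := hX.fintype
  apply le_antisymm
  · refine Submodule.span_le.2 fun F hF => ?_
    obtain ⟨G, hG, hGF⟩ :=
      exists_mem_suppFunctionals_comp_eq (evalExtremePoints (X := X) (Y := Y)) hF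
    let f (x : extremePoints ℝ (closedBall (0 : X) 1)) : Y →L[ℝ] ℝ :=
      G.comp (ContinuousLinearMap.single ℝ (fun _ => Y) x)
    have hsum : F = ∑ x, elemTensor (f x) (x : X) := by
      ext S
      rw [← hGF, ← LinearMap.sum_single_apply (fun _ => Y) (evalExtremePoints (X := X) (Y := Y) S)]
      simp only [sum_apply, map_sum]
      rfl
    rw [hsum]
    refine Submodule.sum_mem _ fun x _ => ?_
    have hfx : f x ∈ suppSpan (T x) :=
      comp_single_mem_suppSpan ((LinearIsometry.norm_map _ T).trans hT).le hG x
    refine (Submodule.map_span_le (elemTensor.flip (x : X)) _ _).2 (fun g hg => ?_)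
      (Submodule.mem_map_of_mem hfx)
    have hx := mem_attainingExtremePoints_of_mem_suppFunctionals hT x.2 hg
    exact Submodule.mem_iSup_of_mem (x : X) <| Submodule.mem_iSup_of_mem hx
      (Submodule.mem_map_of_mem (Submodule.subset_span hg))
  · refine iSup₂_le fun x hx => (Submodule.map_span_le _ _ _).2 fun f hf => ?_
    exact Submodule.subset_span
      (elemTensor_mem_suppFunctionals hT.le (norm_le_of_mem_extremePoints hx.2) hf)

end FiniteDimensional

theorem finrank_suppSpan_eq_sum (hX : (extremePoints ℝ (closedBall (0 : X) 1)).Finite)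
    {T : X →L[ℝ] Y} (hT : ‖T‖ = 1) {ι : Type*} [Fintype ι] (b : Basis ι ℝ X)
    (hb : ∀ i, b i ∈ attainingExtremePoints T) [∀ i, FiniteDimensional ℝ (suppSpan (T (b i)))]
    (hle : ∀ x ∈ attainingExtremePoints T, ∀ i, b.repr x i ≠ 0 →
      suppSpan (T x) ≤ suppSpan (T (b i))) :
    finrank ℝ (suppSpan T) = ∑ i, finrank ℝ (suppSpan (T (b i))) := by
  have : FiniteDimensional ℝ X := b.finiteDimensional_of_finite
  have hsup : ⨆ x ∈ attainingExtremePoints T, (suppSpan (T x)).map (elemTensor.flip x) =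
      ⨆ i, (suppSpan (T (b i))).map (elemTensor.flip (b i)) := by
    refine le_antisymm (iSup₂_le fun x hx => ?_)
      (iSup_le fun i => le_iSup₂_of_le (b i) (hb i) le_rfl)
    rintro _ ⟨f, hf, rfl⟩
    rw [LinearMap.flip_apply, ← b.sum_repr x, map_sum]
    refine Submodule.sum_mem _ fun i _ => ?_
    rw [map_smul]
    by_cases hi : b.repr x i = 0
    · simp [hi]
    · exact Submodule.smul_mem _ _ (Submodule.mem_iSup_of_mem i ⟨f, hle x hx i hi hf, rfl⟩)
  rw [suppSpan_eq_iSup_map_elemTensor hX hT, hsup, finrank_iSup_map_elemTensor]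

end Operators

lemma neg_notMem_of_linearIndepOn {V : Type*} [AddCommGroup V] [Module ℝ V] {s : Set V}
    (hs : LinearIndepOn ℝ id s) {x : V} (hx : x ∈ s) : -x ∉ s := by
  intro hx'
  have : IsAddTorsionFree V := IsAddTorsionFree.of_isTorsionFree ℝ V
  have hpair : LinearIndepOn ℝ id {x, -x} := hs.mono (by grind)
  have hne : x ≠ -x := fun h => hs.ne_zero hx (self_eq_neg.1 h)
  simpa using (LinearIndepOn.pair_iff id hne).1 hpair 1 1 (by simp)

lemma mem_union_neg_iff_of_linearIndepOn {V : Type*} [AddCommGroup V] [Module ℝ V]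
    {s t : Set V} (ht : LinearIndepOn ℝ id t) (hst : s ⊆ t) {x : V} (hx : x ∈ t) :
    x ∈ s ∪ -s ↔ x ∈ s :=
  or_iff_left fun hneg => neg_notMem_of_linearIndepOn ht hx (hst hneg)

section SymmetricSets

variable {V : Type*} [NormedAddCommGroup V] [NormedSpace ℝ V]

lemma linearIndepOn_pair_of_norm_eq_one {c d : V} (hc : ‖c‖ = 1) (hd : ‖d‖ = 1) (hne : d ≠ c)
    (hne' : d ≠ -c) : LinearIndepOn ℝ id {c, d} := by
  have hc0 : c ≠ 0 := norm_ne_zero_iff.1 (by simp [hc])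
  refine linearIndepOn_id_pair hc0 fun r hr => ?_
  have hr1 : |r| = 1 := by simpa [norm_smul, hc, hd] using congrArg norm hr
  rcases eq_or_eq_neg_of_abs_eq hr1 with rfl | rfl
  · exact hne (by simpa using hr.symm)
  · exact hne' (by simpa using hr.symm)

lemma exists_linearIndepOn_eq_union_neg {S : Set V} (hnorm : ∀ x ∈ S, ‖x‖ = 1)
    (hneg : ∀ x ∈ S, -x ∈ S) (hcard : S.encard = 4) :
    ∃ B : Set V, LinearIndepOn ℝ id B ∧ B.ncard = 2 ∧ S = B ∪ -B := by
  obtain ⟨c, hc⟩ : S.Nonempty := encard_ne_zero.1 (by simp [hcard])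
  obtain ⟨d, hd, hdc⟩ : ∃ d ∈ S, d ∉ ({c, -c} : Set V) := by
    refine not_subset.1 fun hsub => ?_
    have := (encard_le_encard hsub).trans (encard_insert_le {-c} c)
    rw [hcard, encard_singleton] at this
    norm_num at this
  obtain ⟨hne, hne'⟩ : d ≠ c ∧ d ≠ -c := by simpa using hdc
  have hB := linearIndepOn_pair_of_norm_eq_one (hnorm c hc) (hnorm d hd) hne hne'
  have hsub : ({c, d} ∪ -{c, d} : Set V) ⊆ S := by
    rintro x (hx | hx)
    · rcases hx with rfl | rfl <;> assumption
    · rcases hx with hx | hx <;> rw [← neg_neg x, hx] <;> exact hneg _ ‹_›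
  have hdisj : Disjoint ({c, d} : Set V) (-{c, d}) :=
    disjoint_left.2 fun x hx => neg_notMem_of_linearIndepOn hB hx
  have hfin : S.Finite := finite_of_encard_eq_coe hcard
  refine ⟨{c, d}, hB, ncard_pair hne.symm,
    (Set.Finite.eq_of_subset_of_encard_le (hfin.subset hsub) hsub ?_).symm⟩
  rw [encard_union_eq hdisj, ← image_neg_eq_neg, neg_injective.encard_image,
    encard_pair hne.symm, hcard]
  norm_num

end SymmetricSets

section SmoothPoints

variable {X Y : Type*} [NormedAddCommGroup X] [NormedSpace ℝ X]
  [NormedAddCommGroup Y] [NormedSpace ℝ Y]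

lemma suppSpan_eq_of_repr_ne_zero (T : X →L[ℝ] Y) {ι : Type*} (b : Basis ι ℝ X) {x : X}
    (hx : x ∈ range b ∪ -range b) {i : ι} (hi : b.repr x i ≠ 0) :
    suppSpan (T x) = suppSpan (T (b i)) := by
  rcases hx with ⟨j, rfl⟩ | ⟨j, hj⟩
  · rw [b.repr_self, Finsupp.single_apply_ne_zero] at hi
    rw [hi.1]
  · rw [← neg_neg x, ← hj, map_neg, Finsupp.neg_apply, neg_ne_zero, b.repr_self,
      Finsupp.single_apply_ne_zero] at hi
    rw [← suppSpan_neg, ← map_neg, ← hj, hi.1]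

theorem finrank_suppSpan_eq_finrank_add_ncard
    (hX : (extremePoints ℝ (closedBall (0 : X) 1)).Finite)
    {T : X →L[ℝ] Y} (hT : ‖T‖ = 1)
    (hspan : Submodule.span ℝ (attainingExtremePoints T) = ⊤)
    (hcover : attainingExtremePoints T ⊆ smoothPoints T 1 ∪ smoothPoints T 2)
    (hle : ∀ x ∈ smoothPoints T 1, ∀ y ∈ attainingExtremePoints T,
      suppSpan (T x) ≤ suppSpan (T y))
    {B : Set X} (hB : LinearIndepOn ℝ id B) (hBS : smoothPoints T 2 = B ∪ -B) :
    finrank ℝ (suppSpan T) = finrank ℝ X + B.ncard := by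
  classical
  have hBA : B ⊆ attainingExtremePoints T := fun x hx => (hBS.ge (Or.inl hx)).1
  let b := Basis.extendLe hB hBA hspan.ge
  have hb (i) : b i = i := congrFun (Basis.coe_extendLe hB hBA hspan.ge) i
  have hbA (i) : b i ∈ attainingExtremePoints T := by
    rw [hb]
    exact hB.extend_subset hBA i.2
  have : Fintype (hB.extend hBA) :=
    (hX.subset fun x hx => (hB.extend_subset hBA hx).2).fintype
  have hdim (i) : finrank ℝ (suppSpan (T (b i))) = 1 + if (i : X) ∈ B then 1 else 0 := by
    have hmem : b i ∈ smoothPoints T 2 ↔ (i : X) ∈ B := by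
      rw [hBS, hb, mem_union_neg_iff_of_linearIndepOn (hB.linearIndepOn_extend hBA)
        (hB.subset_extend hBA) i.2]
    split_ifs with hi
    · exact (hmem.2 hi).2
    · exact ((hcover (hbA i)).resolve_right (mt hmem.1 hi)).2
  have hfd (i : hB.extend hBA) : FiniteDimensional ℝ (suppSpan (T (b i))) :=
    FiniteDimensional.of_finrank_pos (by rw [hdim]; positivity)
  have hrepr : ∀ x ∈ attainingExtremePoints T, ∀ i, b.repr x i ≠ 0 →
      suppSpan (T x) ≤ suppSpan (T (b i)) := by
    have hBb : B ⊆ range b := fun x hx => ⟨⟨x, hB.subset_extend hBA hx⟩, hb _⟩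
    intro x hx i hi
    rcases hcover hx with h₁ | h₂
    · exact hle x h₁ (b i) (hbA i)
    · have hx' : x ∈ range b ∪ -range b := union_subset_union hBb (neg_subset_neg.2 hBb) (hBS.le h₂)
      exact (suppSpan_eq_of_repr_ne_zero T b hx' hi).le
  have hcount : (Subtype.val ⁻¹' B : Set (hB.extend hBA)).ncard = B.ncard :=
    ncard_preimage_of_injective_subset_range Subtype.val_injective
      (by simpa using hB.subset_extend hBA)
  rw [finrank_suppSpan_eq_sum hX hT b hbA hrepr, finrank_eq_card_basis b, ← hcount,
    ncard_eq_toFinset_card']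
  simp [hdim, Finset.sum_add_distrib]

theorem stmt_13_general (hX : (extremePoints ℝ (closedBall (0 : X) 1)).Finite)
    {T : X →L[ℝ] Y} (hT : ‖T‖ = 1)
    (hspan : Submodule.span ℝ (attainingExtremePoints T) = ⊤)
    (hcover : attainingExtremePoints T ⊆ smoothPoints T 1 ∪ smoothPoints T 2)
    (h2 : (smoothPoints T 2).encard = 4)
    (hJ : ∀ x ∈ smoothPoints T 1, ∀ y ∈ smoothPoints T 1,
      pm (suppFunctionals (T x)) = pm (suppFunctionals (T y)))
    (hJ' : ∀ x ∈ smoothPoints T 1, ∀ y ∈ smoothPoints T 2,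
      pm (suppFunctionals (T x)) ⊆ pm (extremePoints ℝ (suppFunctionals (T y)))) :
    finrank ℝ (suppSpan T) = finrank ℝ X + 2 := by
  have hle : ∀ x ∈ smoothPoints T 1, ∀ y ∈ attainingExtremePoints T,
      suppSpan (T x) ≤ suppSpan (T y) := by
    intro x hx y hy
    rcases hcover hy with hy | hy
    · exact suppSpan_le_span_of_subset_pm (subset_union_left.trans (hJ x hx y hy).subset)
    · exact (suppSpan_le_span_of_subset_pm (subset_union_left.trans (hJ' x hx y hy))).trans
        (Submodule.span_mono extremePoints_subset)
  obtain ⟨B, hB, hcard, hBS⟩ := exists_linearIndepOn_eq_union_neg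
    (fun x hx => mem_sphere_zero_iff_norm.1 hx.1.1.1) (fun x => neg_mem_smoothPoints) h2
  rw [finrank_suppSpan_eq_finrank_add_ncard hX hT hspan hcover hle hB hBS, hcard]

end SmoothPoints

lemma finite_extremePoints_closedBall_pi (ι : Type*) [Fintype ι] :
    (extremePoints ℝ (closedBall (0 : ι → ℝ) 1)).Finite := by
  rw [closedBall_pi 0 zero_le_one, extremePoints_pi]
  refine Set.Finite.pi fun i => ?_
  rw [Real.closedBall_eq_Icc, Set.extremePoints_Icc (by norm_num)]
  exact Set.toFinite _

lemma span_vertices_eq_top :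
    Submodule.span ℝ {x₁, -x₁, x₂, -x₂, x₃, -x₃, x₄, -x₄} = ⊤ := by
  refine eq_top_iff.2 fun x _ => ?_
  have hx : x = (x 0 / 2) • (x₁ - x₂) + (x 1 / 2) • (x₂ - x₃) + (x 2 / 2) • (x₁ + x₃) := by
    ext i
    fin_cases i <;> simp [x₁, x₂, x₃] <;> ring
  let P : Submodule ℝ Linf3 := Submodule.span ℝ {x₁, -x₁, x₂, -x₂, x₃, -x₃, x₄, -x₄}
  have h₁ : x₁ ∈ P := Submodule.subset_span (by simp)
  have h₂ : x₂ ∈ P := Submodule.subset_span (by simp)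
  have h₃ : x₃ ∈ P := Submodule.subset_span (by simp)
  rw [hx]
  exact add_mem (add_mem (P.smul_mem _ (sub_mem h₁ h₂)) (P.smul_mem _ (sub_mem h₂ h₃)))
    (P.smul_mem _ (add_mem h₁ h₃))

lemma encard_vertices_le_eight :
    ({x₁, -x₁, x₂, -x₂, x₃, -x₃, x₄, -x₄} : Set Linf3).encard ≤ 8 := by
  grw [encard_insert_le, encard_insert_le, encard_insert_le, encard_insert_le, encard_insert_le,
    encard_insert_le, encard_insert_le, encard_singleton]
  norm_num

lemma MTExt_subset_union_Sk {T : Linf3 →L[ℝ] L13}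
    (hMT : MTExt T = {x₁, -x₁, x₂, -x₂, x₃, -x₃, x₄, -x₄})
    (h1 : (Sk T 1).encard = 4) (h2 : (Sk T 2).encard = 4) : MTExt T ⊆ Sk T 1 ∪ Sk T 2 := by
  have hcard : (MTExt T).encard ≤ (Sk T 1).encard + (Sk T 2).encard := by
    rw [h1, h2, hMT]
    exact encard_vertices_le_eight.trans (by norm_num)
  exact attainingExtremePoints_subset_union_smoothPoints (by decide)
    (finite_extremePoints_closedBall_pi _) hcard

theorem stmt_13
    (T : Linf3 →L[ℝ] L13) (hT : ‖T‖ = 1)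
    (hMT : MTExt T = {x₁, -x₁, x₂, -x₂, x₃, -x₃, x₄, -x₄})
    (h1 : (Sk T 1).encard = 4) (h2 : (Sk T 2).encard = 4)
    (h3 : (Sk T 3).encard = 0)
    (hJ : ∀ xi ∈ Sk T 1, ∀ xj ∈ Sk T 1,
      pm (suppFunctionals (T xi)) = pm (suppFunctionals (T xj)))
    (hJ' : ∀ xi ∈ Sk T 1, ∀ xk ∈ Sk T 2,
      pm (suppFunctionals (T xi)) ⊆ pm (extremePoints ℝ (suppFunctionals (T xk))))
    :
    finrank ℝ (Submodule.span ℝ (suppFunctionals T)) = 5 := by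
  have hspan : Submodule.span ℝ (MTExt T) = ⊤ := hMT ▸ span_vertices_eq_top
  simpa using stmt_13_general (finite_extremePoints_closedBall_pi _) hT hspan
    (MTExt_subset_union_Sk hMT h1 h2) h2 hJ hJ'
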